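/- Let R be a commutative Noetherian ring. Assume mod(R) has a strong generator: there exist s,t ≥ 0 and a finitely generated module G such that every s-th syzygy of a finitely generated module lies in |G|_t. Then for every finitely generated R-module M, the infinite injective dimension locus IID(M) equals V(coca_R(M)); in particular IID(M) is Zariski closed in Spec(R). -/

import Mathlib

open CategoryTheory

noncomputable section

universe u

variable (R : Type u) [CommRing R]

/-- The `n`-th Ext group of two `R`-modules, as an `R`-module. -/
abbrev ExtM (n : ℕ) (M N : ModuleCat.{u} R) : ModuleCat.{u} R :=
  ((Ext R (ModuleCat.{u} R) n).obj (Opposite.op M)).obj N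

/-- The `n`-th cohomological annihilator of a module `M`:
elements `r` with `r • Ext^i(M, N) = 0` for all `i ≥ n` and all finitely generated `N`. -/
def caN (n : ℕ) (M : ModuleCat.{u} R) : Ideal R where
  carrier := {r | ∀ i, n ≤ i → ∀ N : ModuleCat.{u} R, Module.Finite R N →
    ∀ x : ExtM R i M N, r • x = 0}
  zero_mem' := by intro i _ N _ x; simp
  add_mem' := by
    intro a b ha hb i hi N hN x
    rw [add_smul, ha i hi N hN x, hb i hi N hN x, add_zero]
  smul_mem' := by
    intro c r hr i hi N hN x
    simp only [smul_eq_mul, mul_smul, hr i hi N hN x, smul_zero]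

/-- The cohomological annihilator `ca_R(M) = ⋃ₙ ca_R^n(M)`. -/
def ca (M : ModuleCat.{u} R) : Set R := ⋃ n : ℕ, (caN R n M : Set R)

/-- The `n`-th co-cohomological annihilator of a module `M`. -/
def cocaN (n : ℕ) (M : ModuleCat.{u} R) : Ideal R where
  carrier := {r | ∀ i, n ≤ i → ∀ N : ModuleCat.{u} R, Module.Finite R N →
    ∀ x : ExtM R i N M, r • x = 0}
  zero_mem' := by intro i _ N _ x; simp
  add_mem' := by
    intro a b ha hb i hi N hN x
    rw [add_smul, ha i hi N hN x, hb i hi N hN x, add_zero]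
  smul_mem' := by
    intro c r hr i hi N hN x
    simp only [smul_eq_mul, mul_smul, hr i hi N hN x, smul_zero]

/-- The co-cohomological annihilator `coca_R(M) = ⋃ₙ coca_R^n(M)`. -/
def coca (M : ModuleCat.{u} R) : Set R := ⋃ n : ℕ, (cocaN R n M : Set R)

/-- `M` has projective dimension at most `n`: `Ext^i(M, -) = 0` for all `i > n`. -/
def projDimLE (n : ℕ) (M : ModuleCat.{u} R) : Prop :=
  ∀ i : ℕ, n < i → ∀ N : ModuleCat.{u} R, Subsingleton (ExtM R i M N)

/-- `M` has injective dimension at most `n`: `Ext^i(-, M) = 0` for all `i > n`. -/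
def injDimLE (n : ℕ) (M : ModuleCat.{u} R) : Prop :=
  ∀ i : ℕ, n < i → ∀ N : ModuleCat.{u} R, Subsingleton (ExtM R i N M)

/-- `K` is an `n`-th syzygy of `M` with respect to resolutions by
finitely generated projective modules. -/
def IsSyz : ℕ → ModuleCat.{u} R → ModuleCat.{u} R → Prop
  | 0, M, K => Nonempty (K ≃ₗ[R] M)
  | n + 1, M, K => ∃ (L P : ModuleCat.{u} R), IsSyz n M L ∧
      Module.Finite R P ∧ Module.Projective R P ∧
      ∃ f : P →ₗ[R] L, Function.Surjective f ∧ Nonempty (K ≃ₗ[R] LinearMap.ker f)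

/-- `X` is a direct summand of `Y`. -/
def IsSummand (X Y : ModuleCat.{u} R) : Prop :=
  ∃ (i : X →ₗ[R] Y) (p : Y →ₗ[R] X), p.comp i = LinearMap.id

/-- `X` is a direct summand of a finite direct sum of copies of `G`. -/
def IsSummandOfCopies (G X : ModuleCat.{u} R) : Prop :=
  ∃ k : ℕ, IsSummand R X (ModuleCat.of R (Fin k → G))

/-- The subcategories `thickⁿ(G)` of `mod R`. -/
def thickN (G : ModuleCat.{u} R) : ℕ → Set (ModuleCat.{u} R)
  | 0 => {X | Subsingleton X}
  | n + 1 => {X | ∃ (Y Y₁ Y₂ : ModuleCat.{u} R) (f : Y₁ →ₗ[R] Y) (g : Y →ₗ[R] Y₂),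
      Function.Injective f ∧ Function.Surjective g ∧ LinearMap.ker g = LinearMap.range f ∧
      ((Y₁ ∈ thickN G n ∧ IsSummandOfCopies R G Y₂) ∨
        (IsSummandOfCopies R G Y₁ ∧ Y₂ ∈ thickN G n)) ∧
      IsSummand R X Y}

/-- The balls `|G|ₙ` of Dao–Takahashi. -/
def ballN (G : ModuleCat.{u} R) : ℕ → Set (ModuleCat.{u} R)
  | 0 => {X | Subsingleton X}
  | n + 1 => {Y | ∃ (Y' Y₁ Y₂ : ModuleCat.{u} R)
      (f : Y₁ →ₗ[R] (ModuleCat.of R (Y × Y'))) (g : (ModuleCat.of R (Y × Y')) →ₗ[R] Y₂),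
      Function.Injective f ∧ Function.Surjective g ∧ LinearMap.ker g = LinearMap.range f ∧
      Y₁ ∈ ballN G n ∧ IsSummandOfCopies R G Y₂}

/-- A regular local ring: a Noetherian local ring whose maximal ideal can be
generated by `dim R` elements. -/
def IsRegularLocal (A : Type u) [CommRing A] [IsLocalRing A] : Prop :=
  IsNoetherianRing A ∧ ∃ s : Finset A, Ideal.span (↑s : Set A) = IsLocalRing.maximalIdeal A ∧
    (s.card : WithBot ℕ∞) = ringKrullDim A

/-- The localization of a module at a prime, as a module category object over the local ring. -/
abbrev locMod (p : PrimeSpectrum R) (M : ModuleCat.{u} R) :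
    ModuleCat.{u} (Localization.AtPrime p.asIdeal) :=
  ModuleCat.of (Localization.AtPrime p.asIdeal) (LocalizedModule p.asIdeal.primeCompl M)

/-- Depth of a module over a local ring, via vanishing of `Ext` from the residue field. -/
def depthE (A : Type u) [CommRing A] [IsLocalRing A] (N : ModuleCat.{u} A) : ℕ∞ :=
  sInf ((fun n : ℕ => (n : ℕ∞)) ''
    {n : ℕ | ¬ Subsingleton (ExtM A n (ModuleCat.of A (IsLocalRing.ResidueField A)) N)})

/-- The large restricted flat dimension of `M`. -/
def rfdE (M : ModuleCat.{u} R) : ℕ∞ :=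
  ⨆ p : PrimeSpectrum R,
    (depthE (Localization.AtPrime p.asIdeal)
        (ModuleCat.of (Localization.AtPrime p.asIdeal) (Localization.AtPrime p.asIdeal)) -
      depthE (Localization.AtPrime p.asIdeal) (locMod R p M))

/-- `r • f` factors through a finitely generated projective module. -/
def FactorsThroughProj (M : ModuleCat.{u} R) (f : M →ₗ[R] M) : Prop :=
  ∃ P : ModuleCat.{u} R, Module.Projective R P ∧ Module.Finite R P ∧
    ∃ (g : M →ₗ[R] P) (h : P →ₗ[R] M), h.comp g = f

/-- The annihilator of the stable endomorphism ring of `M`. -/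
def annStableEnd (M : ModuleCat.{u} R) : Set R :=
  {r | ∀ f : M →ₗ[R] M, FactorsThroughProj R M (r • f)}

/-- A resolving subcategory of `mod R`. -/
def IsResolving (C : Set (ModuleCat.{u} R)) : Prop :=
  (∀ P : ModuleCat.{u} R, Module.Finite R P → Module.Projective R P → P ∈ C) ∧
  (∀ X Y : ModuleCat.{u} R, Y ∈ C → IsSummand R X Y → X ∈ C) ∧
  (∀ (Y Y₁ Y₂ : ModuleCat.{u} R) (f : Y₁ →ₗ[R] Y) (g : Y →ₗ[R] Y₂),
    Function.Injective f → Function.Surjective g → LinearMap.ker g = LinearMap.range f →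
    Y₁ ∈ C → Y₂ ∈ C → Y ∈ C) ∧
  (∀ X ∈ C, ∀ K : ModuleCat.{u} R, IsSyz R 1 X K → K ∈ C)

/-- The smallest resolving subcategory containing `G`. -/
def resCl (G : ModuleCat.{u} R) : Set (ModuleCat.{u} R) :=
  ⋂₀ {C | IsResolving R C ∧ G ∈ C}

end

/-!
Over a Noetherian ring, Baer's criterion and dimension shifting show that `id M_p ≤ n` if and only
if `Ext^{n+1}(X, M)_p = 0` for every finitely generated `X`. An element of `coca(M)` outside `p`
kills these modules, so `id M_p` is then finite. Conversely, if `id M_p ≤ n`, the finitely generated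
module `Ext^{n+1}(G, M)` vanishes at `p`, so its annihilator `I` is not contained in `p`. Each of
the `t` extensions building a module of `|G|_t` costs one factor of `I`, so `I ^ t` kills
`Ext^{n+1}` of every `s`-th syzygy, hence `Ext^{n+1+s}(N, M)` for every finitely generated `N`; thus
`I ^ t ⊆ coca(M)`, while `I ^ t` is not contained in the prime `p`.
-/

section Comparison

open Opposite

universe w v u' u

variable {k : Type u} [Ring k] {C : Type u'} [Category.{v} C] [Abelian C] [Linear k C]
  [HasExt.{w} C] {X : C}

theorem smul_extMk (P : ProjectiveResolution X) {Y : C} {n m : ℕ} (r : k)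
    (f : P.complex.X n ⟶ Y) (hm : n + 1 = m) (hf : P.complex.d m n ≫ f = 0) :
    r • P.extMk f m hm hf = P.extMk (r • f) m hm (by simp [hf]) := by
  rw [Abelian.Ext.smul_eq_comp_mk₀, P.extMk_comp_mk₀]
  congr 1
  simp

variable (k) in
/-- The map sending an `(n + 1)`-cocycle of `Hom(P, Y)`, for `P` a projective resolution of `X`, to
its class in `Abelian.Ext`. -/
noncomputable def cocycleExtClass (P : ProjectiveResolution X) (Y : C) (n : ℕ) :
    LinearMap.ker ((P.complex.linearYonedaObj k Y).sc' n (n + 1) (n + 2)).g.hom →ₗ[k]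
      Abelian.Ext X Y (n + 1) where
  toFun f := P.extMk f.1 (n + 2) rfl f.2
  map_add' _ _ := (P.add_extMk ..).symm
  map_smul' r _ := (smul_extMk P r ..).symm

theorem cocycleExtClass_surjective (P : ProjectiveResolution X) (Y : C) (n : ℕ) :
    Function.Surjective (cocycleExtClass k P Y n) := fun e ↦
  let ⟨f, hf, hfe⟩ := P.extMk_surjective e (n + 2) rfl
  ⟨⟨f, hf⟩, hfe⟩

theorem ker_cocycleExtClass (P : ProjectiveResolution X) (Y : C) (n : ℕ) :
    LinearMap.ker (cocycleExtClass k P Y n) = LinearMap.range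
      ((P.complex.linearYonedaObj k Y).sc' n (n + 1) (n + 2)).moduleCatToCycles := by
  ext f
  exact (P.extMk_eq_zero_iff f.1 (n + 2) rfl f.2 n rfl).trans
    ⟨fun ⟨g, hg⟩ ↦ ⟨g, Subtype.ext hg⟩, fun ⟨g, hg⟩ ↦ ⟨g, congrArg Subtype.val hg⟩⟩

variable (k) in
/-- The comparison between `Ext` defined by derived functors and `Abelian.Ext`, in positive degrees:
both are the cohomology of `Hom(P, Y)` for a projective resolution `P` of `X`. -/
noncomputable def extLinearEquivAbelianExt [EnoughProjectives C] (X Y : C) (n : ℕ) :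
    ((Ext k C (n + 1)).obj (op X)).obj Y ≃ₗ[k] Abelian.Ext X Y (n + 1) :=
  let P := projectiveResolution X
  let K := P.complex.linearYonedaObj k Y
  (P.isoExt (n + 1) Y ≪≫ K.homologyIsoSc' n (n + 1) (n + 2) (by simp) (by simp) ≪≫
      (K.sc' n (n + 1) (n + 2)).moduleCatHomologyIso).toLinearEquiv ≪≫ₗ
    Submodule.quotEquivOfEq _ _ (ker_cocycleExtClass P Y n).symm ≪≫ₗ
    (cocycleExtClass k P Y n).quotKerEquivOfSurjective (cocycleExtClass_surjective P Y n)

end Comparison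

section Annihilators

universe w v u' u

variable {R : Type u} [CommRing R]

theorem annihilator_mul_annihilator_le_of_exact {E₁ E₂ E₃ : Type*} [AddCommGroup E₁]
    [AddCommGroup E₂] [AddCommGroup E₃] [Module R E₁] [Module R E₂] [Module R E₃]
    {f : E₁ →ₗ[R] E₂} {g : E₂ →ₗ[R] E₃} (hfg : Function.Exact f g) :
    Module.annihilator R E₁ * Module.annihilator R E₃ ≤ Module.annihilator R E₂ := by
  refine Ideal.mul_le.mpr fun a ha b hb ↦ Module.mem_annihilator.mpr fun x ↦ ?_
  obtain ⟨y, hy⟩ := (hfg (b • x)).mp (by rw [map_smul, Module.mem_annihilator.mp hb])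
  rw [mul_smul, ← hy, ← map_smul, Module.mem_annihilator.mp ha, map_zero]

variable {C : Type u'} [Category.{v} C] [Abelian C] [Linear R C] [HasExt.{w} C]

theorem annihilator_ext_mul_annihilator_ext_le {S : ShortComplex C} (hS : S.ShortExact) (M : C)
    (n : ℕ) :
    Module.annihilator R (Abelian.Ext S.X₃ M n) * Module.annihilator R (Abelian.Ext S.X₁ M n) ≤
      Module.annihilator R (Abelian.Ext S.X₂ M n) :=
  annihilator_mul_annihilator_le_of_exact
    (f := (Abelian.Ext.mk₀ S.g).precompOfLinear R M (zero_add n))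
    (g := (Abelian.Ext.mk₀ S.f).precompOfLinear R M (zero_add n))
    ((ShortComplex.ab_exact_iff_function_exact _).mp
      (Abelian.Ext.contravariant_sequence_exact₂' hS M n))

theorem annihilator_ext_le_of_sum_comp_eq_id {ι : Type*} [Fintype ι] {X G : C} (a : ι → (X ⟶ G))
    (b : ι → (G ⟶ X)) (hab : ∑ j, a j ≫ b j = 𝟙 X) (M : C) (n : ℕ) :
    Module.annihilator R (Abelian.Ext G M n) ≤ Module.annihilator R (Abelian.Ext X M n) := by
  refine fun r hr ↦ Module.mem_annihilator.mpr fun e ↦ ?_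
  rw [← Abelian.Ext.mk₀_id_comp e, ← hab, Abelian.Ext.mk₀_sum, Abelian.Ext.sum_comp,
    Finset.smul_sum]
  refine Finset.sum_eq_zero fun j _ ↦ ?_
  rw [← Abelian.Ext.mk₀_comp_mk₀_assoc, ← Abelian.Ext.comp_smul, Module.mem_annihilator.mp hr,
    Abelian.Ext.comp_zero]

theorem annihilator_ext_le_annihilator_ext_succ {S : ShortComplex C} (hS : S.ShortExact)
    [Projective S.X₂] (M : C) (n : ℕ) :
    Module.annihilator R (Abelian.Ext S.X₁ M n) ≤
      Module.annihilator R (Abelian.Ext S.X₃ M (n + 1)) :=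
  LinearMap.annihilator_le_of_surjective (hS.extClass.precompOfLinear R M (add_comm 1 n))
    (fun e ↦ Abelian.Ext.contravariant_sequence_exact₃ hS M e
      (Abelian.Ext.eq_zero_of_projective _) (add_comm 1 n))

end Annihilators

section ExtM

universe u

variable {R : Type u} [CommRing R]

theorem forall_extM_smul_eq_zero_iff {r : R} {X M : ModuleCat.{u} R} {n : ℕ} :
    (∀ x : ExtM R (n + 1) X M, r • x = 0) ↔
      r ∈ Module.annihilator R (Abelian.Ext X M (n + 1)) := by
  rw [← (extLinearEquivAbelianExt R X M n).annihilator_eq, Module.mem_annihilator]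

theorem injDimLE_iff_hasInjectiveDimensionLE {M : ModuleCat.{u} R} {n : ℕ} :
    injDimLE R n M ↔ HasInjectiveDimensionLE M n := by
  refine (forall_congr' fun i ↦ forall_congr' fun hi ↦ forall_congr' fun N ↦ ?_).trans
    (hasInjectiveDimensionLT_iff M (n + 1)).symm
  obtain ⟨j, rfl⟩ := Nat.exists_eq_add_of_lt hi
  exact (extLinearEquivAbelianExt R N M (n + j)).toEquiv.subsingleton_congr.trans
    (subsingleton_iff_forall_eq 0)

theorem injDimLE_locMod_iff {p : PrimeSpectrum R} {M : ModuleCat.{u} R} {n : ℕ} :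
    injDimLE (Localization.AtPrime p.asIdeal) n (locMod R p M) ↔
      HasInjectiveDimensionLE (M.localizedModule p.asIdeal.primeCompl) n := by
  rw [injDimLE_iff_hasInjectiveDimensionLE]
  exact ModuleCat.hasInjectiveDimensionLE_iff_of_linearEquiv
    (.extendScalarsOfIsLocalization p.asIdeal.primeCompl (Localization.AtPrime p.asIdeal)
      (IsLocalizedModule.linearEquiv p.asIdeal.primeCompl
        (LocalizedModule.mkLinearMap p.asIdeal.primeCompl M)
        (M.localizedModuleMkLinearMap p.asIdeal.primeCompl))) n

end ExtM

section Syzygies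

universe u

variable {R : Type u} [CommRing R]

theorem annihilator_ext_le_of_isSummand {X Y : ModuleCat.{u} R} (h : IsSummand R X Y)
    (M : ModuleCat.{u} R) (n : ℕ) :
    Module.annihilator R (Abelian.Ext Y M n) ≤ Module.annihilator R (Abelian.Ext X M n) := by
  obtain ⟨i, p, hip⟩ := h
  exact annihilator_ext_le_of_sum_comp_eq_id (fun _ : Unit ↦ ModuleCat.ofHom i)
    (fun _ ↦ ModuleCat.ofHom p) (by simp [← ModuleCat.ofHom_comp, hip]) M n

theorem annihilator_ext_le_of_isSummandOfCopies {G X : ModuleCat.{u} R}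
    (h : IsSummandOfCopies R G X) (M : ModuleCat.{u} R) (n : ℕ) :
    Module.annihilator R (Abelian.Ext G M n) ≤ Module.annihilator R (Abelian.Ext X M n) := by
  obtain ⟨k, hX⟩ := h
  refine le_trans ?_ (annihilator_ext_le_of_isSummand hX M n)
  refine annihilator_ext_le_of_sum_comp_eq_id
    (fun j : Fin k ↦ ModuleCat.ofHom (LinearMap.proj j : (Fin k → G) →ₗ[R] G))
    (fun j ↦ ModuleCat.ofHom (LinearMap.single R (fun _ ↦ G) j)) ?_ M n
  ext x j
  simp [ModuleCat.hom_sum, Finset.sum_apply, Pi.single_apply]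

theorem annihilator_ext_pow_le_of_mem_ballN {G Y : ModuleCat.{u} R} {t : ℕ}
    (hY : Y ∈ ballN R G t) (M : ModuleCat.{u} R) (n : ℕ) :
    Module.annihilator R (Abelian.Ext G M n) ^ t ≤ Module.annihilator R (Abelian.Ext Y M n) := by
  induction t generalizing Y with
  | zero =>
    have : Subsingleton Y := hY
    refine fun r _ ↦ Module.mem_annihilator.mpr fun e ↦ ?_
    rw [← Abelian.Ext.mk₀_id_comp e, (ModuleCat.isZero_of_subsingleton Y).eq_zero_of_src (𝟙 Y),
      Abelian.Ext.mk₀_zero, Abelian.Ext.zero_comp, smul_zero]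
  | succ t ih =>
    obtain ⟨Y', Y₁, Y₂, f, g, hf, hg, hfg, hY₁, hY₂⟩ := hY
    have hex : Function.Exact f g := LinearMap.exact_iff.mpr hfg
    let S : ShortComplex (ModuleCat.{u} R) :=
      ModuleCat.shortComplexOfCompEqZero f g hex.linearMap_comp_eq_zero
    have hS : S.ShortExact := ModuleCat.shortComplex_shortExact S hex hf hg
    have hY : IsSummand R Y S.X₂ := ⟨LinearMap.inl R Y Y', LinearMap.fst R Y Y', rfl⟩
    calc Module.annihilator R (Abelian.Ext G M n) ^ (t + 1)
      _ ≤ Module.annihilator R (Abelian.Ext Y₂ M n) *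
          Module.annihilator R (Abelian.Ext Y₁ M n) := by
        rw [pow_succ']
        exact Ideal.mul_mono (annihilator_ext_le_of_isSummandOfCopies hY₂ M n) (ih hY₁)
      _ ≤ Module.annihilator R (Abelian.Ext S.X₂ M n) :=
        annihilator_ext_mul_annihilator_ext_le hS M n
      _ ≤ Module.annihilator R (Abelian.Ext Y M n) := annihilator_ext_le_of_isSummand hY M n

variable [IsNoetherianRing R]

theorem finite_of_isSyz {s : ℕ} {N K : ModuleCat.{u} R} [Module.Finite R N]
    (h : IsSyz R s N K) : Module.Finite R K := by
  cases s with
  | zero => exact h.elim fun e ↦ Module.Finite.equiv e.symm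
  | succ s =>
    obtain ⟨_, _, _, _, _, _, _, ⟨e⟩⟩ := h
    exact Module.Finite.equiv e.symm

theorem le_annihilator_ext_of_forall_isSyz {I : Ideal R} {N M : ModuleCat.{u} R}
    [Module.Finite R N] {s n : ℕ}
    (h : ∀ K, IsSyz R s N K → I ≤ Module.annihilator R (Abelian.Ext K M n)) :
    I ≤ Module.annihilator R (Abelian.Ext N M (n + s)) := by
  induction s generalizing n with
  | zero => exact h N ⟨LinearEquiv.refl R N⟩
  | succ s ih =>
    rw [← add_assoc, add_right_comm]
    refine ih fun L hL ↦ ?_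
    have := finite_of_isSyz hL
    obtain ⟨P, _, _, _, _, f, hf⟩ := Module.exists_finite_presentation R L
    exact (h _ ⟨L, ModuleCat.of R P, hL, inferInstance, inferInstance, f, hf, ⟨.refl R _⟩⟩).trans
      (annihilator_ext_le_annihilator_ext_succ (LinearMap.shortExact_shortComplexKer hf) M n)

theorem le_annihilator_ext_of_le {I : Ideal R} {M : ModuleCat.{u} R} {n i : ℕ} (hi : n ≤ i)
    (h : ∀ N : ModuleCat.{u} R, Module.Finite R N → I ≤ Module.annihilator R (Abelian.Ext N M n))
    (N : ModuleCat.{u} R) [Module.Finite R N] :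
    I ≤ Module.annihilator R (Abelian.Ext N M i) := by
  obtain ⟨s, rfl⟩ := Nat.exists_eq_add_of_le hi
  exact le_annihilator_ext_of_forall_isSyz fun K hK ↦ h K (finite_of_isSyz hK)

theorem mem_coca_iff {r : R} {M : ModuleCat.{u} R} :
    r ∈ coca R M ↔ ∃ n : ℕ, ∀ N : ModuleCat.{u} R, Module.Finite R N →
      r ∈ Module.annihilator R (Abelian.Ext N M (n + 1)) := by
  refine Set.mem_iUnion.trans ⟨fun ⟨n, hn⟩ ↦ ⟨n, fun N hN ↦ ?_⟩, fun ⟨n, hn⟩ ↦ ⟨n + 1, ?_⟩⟩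
  · exact forall_extM_smul_eq_zero_iff.mp (hn (n + 1) n.le_succ N hN)
  · rintro (_ | i) hi N hN
    · omega
    · exact forall_extM_smul_eq_zero_iff.mpr (le_annihilator_ext_of_le hi
        (fun N hN ↦ (Ideal.span_singleton_le_iff_mem _).mpr (hn N hN)) N
        (Ideal.mem_span_singleton_self r))

end Syzygies

section DimensionShifting

universe w v u' u

variable {C : Type u'} [Category.{v} C] [Abelian C]

theorem exists_shortExact_injective [EnoughInjectives C] (M : C) :
    ∃ S : ShortComplex C, S.ShortExact ∧ Injective S.X₂ ∧ S.X₁ = M :=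
  ⟨.mk (Injective.ι M) (Limits.cokernel.π _) (Limits.cokernel.condition _),
    { exact := ShortComplex.exact_cokernel _ }, inferInstance, rfl⟩

variable [HasExt.{w} C]

theorem bijective_postcomp_extClass {S : ShortComplex C} (hS : S.ShortExact)
    [Injective S.X₂] (X : C) (n : ℕ) :
    Function.Bijective (hS.extClass.postcomp X (rfl : n + 1 + 1 = n + 2)) := by
  refine ⟨(injective_iff_map_eq_zero _).mpr fun e he ↦ ?_, fun e ↦
    Abelian.Ext.covariant_sequence_exact₁ X hS e (Abelian.Ext.eq_zero_of_injective _) rfl⟩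
  obtain ⟨y, rfl⟩ := Abelian.Ext.covariant_sequence_exact₃ X hS e rfl he
  rw [Abelian.Ext.eq_zero_of_injective y, Abelian.Ext.zero_comp]

/-- Dimension shifting along `0 → S.X₁ → S.X₂ → S.X₃ → 0` with `S.X₂` injective. -/
noncomputable def extSuccLinearEquiv (R : Type u) [CommRing R] [Linear R C]
    {S : ShortComplex C} (hS : S.ShortExact) [Injective S.X₂] (X : C) (n : ℕ) :
    Abelian.Ext X S.X₃ (n + 1) ≃ₗ[R] Abelian.Ext X S.X₁ (n + 2) :=
  .ofBijective (hS.extClass.postcompOfLinear R X rfl) (bijective_postcomp_extClass hS X n)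

theorem extClass_comp_mk₀_eq_zero_iff {S : ShortComplex C} (hS : S.ShortExact) {M : C}
    {f : S.X₁ ⟶ M} :
    hS.extClass.comp (Abelian.Ext.mk₀ f) (add_zero 1) = 0 ↔ ∃ g : S.X₂ ⟶ M, S.f ≫ g = f := by
  constructor
  · intro hf
    obtain ⟨y, hy⟩ := Abelian.Ext.contravariant_sequence_exact₁ hS M _ _ hf
    obtain ⟨g, rfl⟩ := Abelian.Ext.homEquiv₀.symm.surjective y
    exact ⟨g, Abelian.Ext.homEquiv₀.symm.injective (by simpa using hy)⟩
  · rintro ⟨g, rfl⟩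
    rw [← Abelian.Ext.mk₀_comp_mk₀]
    exact hS.extClass_comp_assoc _

theorem subsingleton_localizedModule_ext_one_iff {R : Type u} [CommRing R] [Linear R C]
    (T : Submonoid R) {S : ShortComplex C} (hS : S.ShortExact) [Projective S.X₂] {M : C} :
    Subsingleton (LocalizedModule T (Abelian.Ext S.X₃ M 1)) ↔
      ∀ f : S.X₁ ⟶ M, ∃ r ∈ T, ∃ g : S.X₂ ⟶ M, S.f ≫ g = r • f := by
  have connecting_smul (r : R) (f : S.X₁ ⟶ M) :
      r • hS.extClass.comp (Abelian.Ext.mk₀ f) (add_zero 1) =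
        hS.extClass.comp (Abelian.Ext.mk₀ (r • f)) (add_zero 1) := by
    rw [Abelian.Ext.mk₀_smul, Abelian.Ext.comp_smul]
  rw [LocalizedModule.subsingleton_iff]
  constructor
  · intro h f
    obtain ⟨r, hr, hrf⟩ := h (hS.extClass.comp (Abelian.Ext.mk₀ f) (add_zero 1))
    exact ⟨r, hr, (extClass_comp_mk₀_eq_zero_iff hS).mp (connecting_smul r f ▸ hrf)⟩
  · intro h e
    obtain ⟨y, rfl⟩ := Abelian.Ext.contravariant_sequence_exact₃ hS M e
      (Abelian.Ext.eq_zero_of_projective _) (add_zero 1)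
    obtain ⟨f, rfl⟩ := Abelian.Ext.homEquiv₀.symm.surjective y
    obtain ⟨r, hr, hrf⟩ := h f
    exact ⟨r, hr, (connecting_smul r f).trans ((extClass_comp_mk₀_eq_zero_iff hS).mpr hrf)⟩

end DimensionShifting

section Localization

universe u

variable {R : Type u} [CommRing R] (T : Submonoid R)

theorem surjective_isLocalizedModule_map_iff {M N M' N' : Type*} [AddCommGroup M]
    [AddCommGroup N] [AddCommGroup M'] [AddCommGroup N'] [Module R M] [Module R N] [Module R M']
    [Module R N'] (f : M →ₗ[R] M') (g : N →ₗ[R] N') [IsLocalizedModule T f]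
    [IsLocalizedModule T g] {h : M →ₗ[R] N} :
    Function.Surjective (IsLocalizedModule.map T f g h) ↔
      ∀ y : N, ∃ r ∈ T, ∃ x : M, h x = r • y := by
  refine ⟨fun hsurj y ↦ ?_, fun hdiv y' ↦ ?_⟩
  · obtain ⟨x', hx'⟩ := hsurj (g y)
    obtain ⟨⟨x, a⟩, rfl⟩ := IsLocalizedModule.mk'_surjective T f x'
    rw [Function.uncurry_apply_pair, IsLocalizedModule.map_mk', IsLocalizedModule.mk'_eq_iff,
      Submonoid.smul_def, ← map_smul] at hx'
    obtain ⟨c, hc⟩ := (IsLocalizedModule.eq_iff_exists T g).mp hx'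
    exact ⟨c * a, mul_mem c.2 a.2, c • x, by simpa [mul_smul, Submonoid.smul_def] using hc⟩
  · obtain ⟨⟨y, a⟩, rfl⟩ := IsLocalizedModule.mk'_surjective T g y'
    obtain ⟨r, hr, x, hx⟩ := hdiv y
    exact ⟨IsLocalizedModule.mk' f x (⟨r, hr⟩ * a), by
      rw [IsLocalizedModule.map_mk', hx]
      exact IsLocalizedModule.mk'_cancel_left g y ⟨r, hr⟩ a⟩

theorem surjective_lcomp_localized_iff {A K P C K' P' C' : Type*} [CommRing A] [Algebra R A]
    [IsLocalization T A] [AddCommGroup K] [AddCommGroup P] [AddCommGroup C] [AddCommGroup K']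
    [AddCommGroup P'] [AddCommGroup C'] [Module R K] [Module R P] [Module R C] [Module R K']
    [Module R P'] [Module R C'] [Module A K'] [Module A P'] [Module A C']
    [IsScalarTower R A K'] [IsScalarTower R A P'] [IsScalarTower R A C']
    [Module.FinitePresentation R K] [Module.FinitePresentation R P]
    (k : K →ₗ[R] K') (p : P →ₗ[R] P') (c : C →ₗ[R] C') [IsLocalizedModule T k]
    [IsLocalizedModule T p] [IsLocalizedModule T c] {ι : K →ₗ[R] P} {ι' : K' →ₗ[A] P'}
    (hι : ∀ x, ι' (k x) = p (ι x)) :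
    Function.Surjective (ι'.lcomp A C') ↔
      ∀ f : K →ₗ[R] C, ∃ r ∈ T, ∃ g : P →ₗ[R] C, g ∘ₗ ι = r • f := by
  let kc := IsLocalizedModule.mapExtendScalars T k c A
  let pc := IsLocalizedModule.mapExtendScalars T p c A
  have lcomp_eq : (ι'.lcomp A C').restrictScalars R =
      IsLocalizedModule.map T pc kc (ι.lcomp R C) := by
    refine IsLocalizedModule.linearMap_ext T pc kc ?_
    ext g : 1
    apply LinearMap.restrictScalars_injective R
    refine IsLocalizedModule.linearMap_ext T k c ?_
    ext x
    simp [pc, kc, hι]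
  rw [← LinearMap.coe_restrictScalars R (ι'.lcomp A C'), lcomp_eq,
    surjective_isLocalizedModule_map_iff]
  rfl

theorem subsingleton_localizedModule_ext_one_iff_of_exact {K P X : Type u} [AddCommGroup K]
    [AddCommGroup P] [AddCommGroup X] [Module R K] [Module R P] [Module R X]
    [Module.Projective R P] {i : K →ₗ[R] P} {q : P →ₗ[R] X} (hi : Function.Injective i)
    (hiq : Function.Exact i q) (hq : Function.Surjective q) {M : ModuleCat.{u} R} :
    Subsingleton (LocalizedModule T (Abelian.Ext (ModuleCat.of R X) M 1)) ↔
      ∀ f : K →ₗ[R] M, ∃ r ∈ T, ∃ g : P →ₗ[R] M, g ∘ₗ i = r • f := by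
  let S : ShortComplex (ModuleCat.{u} R) :=
    ModuleCat.shortComplexOfCompEqZero i q hiq.linearMap_comp_eq_zero
  have hS : S.ShortExact := ModuleCat.shortComplex_shortExact S hiq hi hq
  have : Projective S.X₂ := inferInstanceAs (Projective (ModuleCat.of R P))
  rw [subsingleton_localizedModule_ext_one_iff T hS]
  refine ⟨fun h f ↦ ?_, fun h f ↦ ?_⟩
  · obtain ⟨r, hr, g, hg⟩ := h (ModuleCat.ofHom f)
    exact ⟨r, hr, g.hom, congrArg ModuleCat.Hom.hom hg⟩
  · obtain ⟨r, hr, g, hg⟩ := h f.hom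
    exact ⟨r, hr, ModuleCat.ofHom g, ModuleCat.hom_ext hg⟩

theorem injective_localized_iff [IsNoetherianRing R] {M : ModuleCat.{u} R} {M' : Type u}
    [AddCommGroup M'] [Module R M'] [Module (Localization T) M']
    [IsScalarTower R (Localization T) M'] (φ : M →ₗ[R] M') [IsLocalizedModule T φ] :
    Module.Injective (Localization T) M' ↔ ∀ X : ModuleCat.{u} R, Module.Finite R X →
      Subsingleton (LocalizedModule T (Abelian.Ext X M 1)) := by
  constructor
  · intro hM' X _
    obtain ⟨P, _, _, _, _, f, hf⟩ := Module.exists_finite_presentation R X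
    have : Module.FinitePresentation R P := Module.finitePresentation_of_finite R P
    have : Module.FinitePresentation R (LinearMap.ker f) := Module.finitePresentation_of_finite R _
    let k := LocalizedModule.mkLinearMap T (LinearMap.ker f)
    let p := LocalizedModule.mkLinearMap T P
    let i := IsLocalizedModule.mapExtendScalars T k p (Localization T) (LinearMap.ker f).subtype
    have hi : Function.Injective i :=
      IsLocalizedModule.map_injective T k p _ (Submodule.injective_subtype _)
    rw [show X = ModuleCat.of R X from rfl, subsingleton_localizedModule_ext_one_iff_of_exact T
        (Submodule.injective_subtype _) (LinearMap.exact_subtype_ker_map f) hf,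
      ← surjective_lcomp_localized_iff T (ι' := i) k p φ fun _ ↦ IsLocalizedModule.map_apply ..]
    exact fun g ↦ (Module.Injective.out i hi g).imp fun _ ↦ LinearMap.ext
  · intro hExt
    rw [← Module.Baer.iff_injective, Module.Baer.iff_surjective]
    intro J
    obtain ⟨I, rfl⟩ : ∃ I : Ideal R,
        I.localized' (Localization T) T (Algebra.linearMap R (Localization T)) = J :=
      ⟨J.comap (algebraMap R _), by simp [Ideal.localized'_eq_map, IsLocalization.map_under T]⟩
    have : Module.FinitePresentation R I := Module.finitePresentation_of_finite R I
    rw [surjective_lcomp_localized_iff T (ι := I.subtype) (I.toLocalized' _ T _)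
        (Algebra.linearMap R (Localization T)) φ fun _ ↦ rfl,
      ← subsingleton_localizedModule_ext_one_iff_of_exact T I.injective_subtype
        (LinearMap.exact_subtype_mkQ I) I.mkQ_surjective]
    exact hExt _ (inferInstanceAs (Module.Finite R (R ⧸ I)))

theorem hasInjectiveDimensionLE_localizedModule_iff [IsNoetherianRing R] {M : ModuleCat.{u} R}
    {n : ℕ} : HasInjectiveDimensionLE (M.localizedModule T) n ↔
      ∀ X : ModuleCat.{u} R, Module.Finite R X →
        Subsingleton (LocalizedModule T (Abelian.Ext X M (n + 1))) := by
  induction n generalizing M with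
  | zero =>
    rw [HasInjectiveDimensionLE, zero_add, ← injective_iff_hasInjectiveDimensionLT_one,
      ← Module.injective_iff_injective_object]
    exact injective_localized_iff T (M.localizedModuleMkLinearMap T)
  | succ n ih =>
    obtain ⟨S, hS, _, rfl⟩ := exists_shortExact_injective M
    have hST := hS.map_of_exact (ModuleCat.localizedModuleFunctor T)
    have injective_loc : Injective (S.map (ModuleCat.localizedModuleFunctor T)).X₂ :=
      (ModuleCat.localizedModuleFunctor.{u} T).injective_obj _
    refine (hST.hasInjectiveDimensionLT_X₃_iff n injective_loc).symm.trans (ih.trans ?_)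
    refine forall₂_congr fun X _ ↦ ?_
    exact (IsLocalizedModule.mapEquiv T (LocalizedModule.mkLinearMap T _)
      (LocalizedModule.mkLinearMap T _) (Localization T)
      (extSuccLinearEquiv R hS X n)).toEquiv.subsingleton_congr

end Localization

section InjectiveDimensionLocus

universe u

variable {R : Type u} [CommRing R] [IsNoetherianRing R] {M : ModuleCat.{u} R}

theorem injDimLE_locMod_iff_notMem_support {p : PrimeSpectrum R} {n : ℕ} :
    injDimLE (Localization.AtPrime p.asIdeal) n (locMod R p M) ↔
      ∀ X : ModuleCat.{u} R, Module.Finite R X →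
        p ∉ Module.support R (Abelian.Ext X M (n + 1)) := by
  simp only [injDimLE_locMod_iff, hasInjectiveDimensionLE_localizedModule_iff,
    Module.notMem_support_iff]

theorem exists_injDimLE_locMod_of_mem_coca {p : PrimeSpectrum R} {r : R} (hr : r ∈ coca R M)
    (hrp : r ∉ p.asIdeal) :
    ∃ n, injDimLE (Localization.AtPrime p.asIdeal) n (locMod R p M) := by
  obtain ⟨n, hn⟩ := mem_coca_iff.mp hr
  exact ⟨n, injDimLE_locMod_iff_notMem_support.mpr fun X hX hp ↦
    hrp (Module.annihilator_le_of_mem_support hp (hn X hX))⟩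

theorem annihilator_ext_pow_subset_coca {G : ModuleCat.{u} R} {s t : ℕ}
    (hgen : ∀ N : ModuleCat.{u} R, Module.Finite R N →
      ∀ K : ModuleCat.{u} R, IsSyz R s N K → K ∈ ballN R G t) (n : ℕ) :
    ((Module.annihilator R (Abelian.Ext G M (n + 1)) ^ t : Ideal R) : Set R) ⊆ coca R M := by
  refine fun r hr ↦ mem_coca_iff.mpr ⟨n + s, fun N hN ↦ ?_⟩
  rw [add_right_comm]
  exact le_annihilator_ext_of_forall_isSyz
    (fun K hK ↦ annihilator_ext_pow_le_of_mem_ballN (hgen N hN K hK) M (n + 1)) hr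

end InjectiveDimensionLocus

/-- if `mod R` has a strong generator then `IID(M) = V(coca_R(M))`,
and in particular `IID(M)` is closed. -/
theorem stmt15 (R : Type u) [CommRing R] [IsNoetherianRing R]
    (G : ModuleCat.{u} R) (hG : Module.Finite R G) (s t : ℕ)
    (hgen : ∀ M : ModuleCat.{u} R, Module.Finite R M →
      ∀ K : ModuleCat.{u} R, IsSyz R s M K → K ∈ ballN R G t)
    (M : ModuleCat.{u} R) [Module.Finite R M] :
    {p : PrimeSpectrum R |
        ∀ n : ℕ, ¬ injDimLE (Localization.AtPrime p.asIdeal) n (locMod R p M)} =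
      {p : PrimeSpectrum R | coca R M ⊆ (p.asIdeal : Set R)} ∧
    IsClosed {p : PrimeSpectrum R |
        ∀ n : ℕ, ¬ injDimLE (Localization.AtPrime p.asIdeal) n (locMod R p M)} := by
  have locus_eq : {p : PrimeSpectrum R |
        ∀ n : ℕ, ¬ injDimLE (Localization.AtPrime p.asIdeal) n (locMod R p M)} =
      {p : PrimeSpectrum R | coca R M ⊆ (p.asIdeal : Set R)} := by
    refine Set.ext fun p ↦ ⟨fun hp r hr ↦ ?_, fun hp n hn ↦ ?_⟩
    · by_contra hrp
      obtain ⟨n, hn⟩ := exists_injDimLE_locMod_of_mem_coca hr hrp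
      exact hp n hn
    · have hsupp := injDimLE_locMod_iff_notMem_support.mp hn G hG
      rw [Module.mem_support_iff_of_finite] at hsupp
      have hpow : Module.annihilator R (Abelian.Ext G M (n + 1)) ^ t ≤ p.asIdeal :=
        fun r hr ↦ hp (annihilator_ext_pow_subset_coca hgen n hr)
      exact hsupp (p.isPrime.le_of_pow_le hpow)
  exact ⟨locus_eq, locus_eq ▸ PrimeSpectrum.isClosed_zeroLocus (coca R M)⟩
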